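/- Let p = 2n + 1 be an odd prime and let m be an integer with m ≢ 0 (mod p) and m ≢ 4 (mod p). Then ∑_{k=1}^n (C(2k,k)/m^k) · H_k^{(2)} ≡ −ℓ · ∑_{k=1}^n C(2k,k)·H_k/(k·(4−m)^k) (mod p), where ℓ ∈ {1, −1} is the Legendre symbol of m(m−4) modulo p. -/

import Mathlib

/-- `H n` is the harmonic number `∑_{k=1}^n 1/k`. -/
def H (n : ℕ) : ℚ := ∑ k ∈ Finset.Icc 1 n, (1 : ℚ) / k

/-- `H2 n` is the second-order harmonic number `∑_{k=1}^n 1/k²`. -/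
def H2 (n : ℕ) : ℚ := ∑ k ∈ Finset.Icc 1 n, (1 : ℚ) / k ^ 2

/-- The Euler numbers: `E 0 = 1` and `∑_{0 ≤ k ≤ n, k even} C(n,k) E_{n-k} = 0` for `n ≥ 1`. -/
def eulerNumber : ℕ → ℚ
  | 0 => 1
  | n + 1 =>
      -∑ j ∈ (Finset.range (n + 1)).attach,
        if Even (n + 1 - j.1) then ((n + 1).choose (n + 1 - j.1) : ℚ) * eulerNumber j.1 else 0
decreasing_by exact Finset.mem_range.mp j.2

/-- For rationals, `a ≡ b (mod m)` : `m` divides the numerator of `a - b` in lowest terms. -/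
def ratModEq (m : ℕ) (a b : ℚ) : Prop := (m : ℤ) ∣ (a - b).num

/-!
Modulo `p = 2n + 1` we have `n ≡ -1/2`, so `C(2k,k) ≡ (-4)^k C(n,k)` for `k < p`; by Euler's
criterion the Legendre symbol of `m(m-4)` is `((m-4)/m)^n`. This reduces the congruence to an exact
identity between rational numbers. Expanding both sides of `(a + b) - bE = a + b(1 - E)`, where `E`
is the shift of sequences, to the power `n` transforms a sum with weights `f k` into one with
weights `∑_i (-1)^i C(k,i) f i`, and the identity follows because the weights `H k / k` are
transformed into `-H2 k`.
-/

open Finset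

section BinomialTransform

theorem smul_one_add_smul_pow_apply {R M : Type*} [CommRing R] [AddCommGroup M] [Module R M]
    (a b : R) (L : Module.End R M) (n : ℕ) (x : M) :
    ((a • 1 + b • L) ^ n) x =
      ∑ k ∈ range (n + 1), (n.choose k * a ^ (n - k) * b ^ k) • (L ^ k) x := by
  have hcomm : Commute (b • L) (a • (1 : Module.End R M)) :=
    ((Commute.one_right L).smul_left b).smul_right a
  rw [add_comm, hcomm.add_pow, LinearMap.sum_apply]
  refine sum_congr rfl fun k _ => ?_
  rw [← nsmul_eq_mul', smul_pow, smul_pow, one_pow, mul_smul_comm, mul_one, smul_smul,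
    ← Nat.cast_smul_eq_nsmul R, smul_smul, LinearMap.smul_apply, mul_assoc]

variable {R : Type*} [CommRing R]

/-- The shift operator `f ↦ (k ↦ f (k + 1))` on sequences, as an `R`-linear endomorphism so that
polynomials in it can be expanded by the binomial theorem. -/
def shift (R : Type*) [CommRing R] : Module.End R (ℕ → R) := LinearMap.funLeft R R Nat.succ

theorem shift_pow_apply (f : ℕ → R) (k i : ℕ) : (shift R ^ k) f i = f (i + k) := by
  induction k generalizing i with
  | zero => simp
  | succ k ih =>
    rw [pow_succ', Module.End.mul_apply, shift, LinearMap.funLeft_apply, ← shift, ih,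
      Nat.succ_add_eq_add_succ]

/-- The binomial transform `n ↦ ∑_k (-1)^k C(n,k) f k` of a sequence, in the normalization that
makes it an involution. -/
def binomialTransform (f : ℕ → R) (n : ℕ) : R :=
  ∑ k ∈ range (n + 1), (-1) ^ k * n.choose k * f k

theorem binomialTransform_eq_one_sub_shift_pow (f : ℕ → R) (n : ℕ) :
    binomialTransform f n = ((1 - shift R) ^ n) f 0 := by
  have hop : 1 - shift R = (1 : R) • 1 + (-1 : R) • shift R := by module
  rw [hop, smul_one_add_smul_pow_apply, binomialTransform, Finset.sum_apply]
  refine sum_congr rfl fun k _ => ?_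
  rw [Pi.smul_apply, shift_pow_apply, zero_add, smul_eq_mul]
  ring

theorem binomialTransform_succ (f : ℕ → R) (n : ℕ) :
    binomialTransform f (n + 1) =
      binomialTransform f n - binomialTransform (fun k => f (k + 1)) n := by
  simp only [binomialTransform_eq_one_sub_shift_pow, pow_succ, Module.End.mul_apply,
    LinearMap.sub_apply, Module.End.one_apply, map_sub, Pi.sub_apply]
  rfl

theorem binomialTransform_add (f g : ℕ → R) (n : ℕ) :
    binomialTransform (fun k => f k + g k) n = binomialTransform f n + binomialTransform g n := by
  simp only [binomialTransform, mul_add, sum_add_distrib]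

theorem binomialTransform_const_succ (c : R) (n : ℕ) :
    binomialTransform (fun _ => c) (n + 1) = 0 := by
  rw [binomialTransform_succ, sub_self]

theorem sum_choose_mul_binomialTransform (a b : R) (f : ℕ → R) (n : ℕ) :
    ∑ k ∈ range (n + 1), n.choose k * a ^ (n - k) * b ^ k * binomialTransform f k =
      ∑ k ∈ range (n + 1), n.choose k * (a + b) ^ (n - k) * (-b) ^ k * f k := by
  have hop : a • 1 + b • (1 - shift R) = (a + b) • 1 + (-b) • shift R := by module
  have h := congrFun (smul_one_add_smul_pow_apply a b (1 - shift R) n f) 0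
  rw [hop, smul_one_add_smul_pow_apply] at h
  simpa only [Finset.sum_apply, Pi.smul_apply, smul_eq_mul, shift_pow_apply, zero_add,
    ← binomialTransform_eq_one_sub_shift_pow] using h.symm

theorem binomialTransform_succ_div {K : Type*} [Field K] [CharZero K] (f : ℕ → K) (n : ℕ) :
    binomialTransform (fun k => f (k + 1) / (k + 1)) n =
      (f 0 - binomialTransform f (n + 1)) / (n + 1) := by
  rw [eq_div_iff n.cast_add_one_ne_zero, binomialTransform, binomialTransform,
    sum_range_succ' _ (n + 1), pow_zero, Nat.choose_zero_right, Nat.cast_one, one_mul, one_mul,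
    sub_add_cancel_right, ← sum_neg_distrib, sum_mul]
  refine sum_congr rfl fun k _ => ?_
  have hk : (k + 1 : K) ≠ 0 := k.cast_add_one_ne_zero
  have hchoose : (n + 1 : K) * n.choose k = (n + 1).choose (k + 1) * (k + 1) :=
    mod_cast Nat.add_one_mul_choose_eq n k
  field_simp
  linear_combination f (k + 1) * (-1) ^ k * hchoose

end BinomialTransform

section Harmonic

theorem H_zero : H 0 = 0 := rfl

theorem H2_zero : H2 0 = 0 := rfl

theorem H_succ (n : ℕ) : H (n + 1) = H n + 1 / (n + 1) := by
  rw [H, sum_Icc_succ_top n.succ_pos, Nat.cast_succ, H]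

theorem H2_succ (n : ℕ) : H2 (n + 1) = H2 n + 1 / (n + 1) ^ 2 := by
  rw [H2, sum_Icc_succ_top n.succ_pos, Nat.cast_succ, H2]

theorem binomialTransform_H_succ (n : ℕ) : binomialTransform H (n + 1) = -1 / (n + 1) := by
  have hrecip := binomialTransform_succ_div (fun _ => (1 : ℚ)) n
  rw [binomialTransform_const_succ, sub_zero] at hrecip
  rw [binomialTransform_succ]
  simp only [H_succ]
  rw [binomialTransform_add, hrecip]
  ring

theorem binomialTransform_H_div (n : ℕ) : binomialTransform (fun k => H k / k) n = -H2 n := by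
  induction n with
  | zero => simp [binomialTransform, H_zero, H2_zero]
  | succ n ih =>
    have hstep := binomialTransform_succ_div H n
    rw [H_zero, binomialTransform_H_succ] at hstep
    rw [binomialTransform_succ, ih, H2_succ]
    push_cast
    rw [hstep]
    field_simp
    ring

theorem sum_choose_mul_H2 (n : ℕ) (a b : ℚ) :
    ∑ k ∈ Icc 1 n, n.choose k * a ^ (n - k) * b ^ k * H2 k =
      -∑ k ∈ Icc 1 n, n.choose k * (a + b) ^ (n - k) * (-b) ^ k * (H k / k) := by
  have h := sum_choose_mul_binomialTransform a b (fun k => H k / k) n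
  simp only [binomialTransform_H_div, mul_neg, sum_neg_distrib, range_eq_Ico,
    sum_eq_sum_Ico_succ_bot n.succ_pos, H_zero, H2_zero, zero_div, mul_zero, neg_zero,
    zero_add] at h
  exact neg_eq_iff_eq_neg.mp h

theorem sum_choose_mul_H2_div_pow (n : ℕ) {a b c : ℚ} (ha : a ≠ 0) (hc : c ≠ 0)
    (habc : a + b + c = 0) :
    ∑ k ∈ Icc 1 n, n.choose k * b ^ k * (H2 k / a ^ k) =
      -(-c / a) ^ n * ∑ k ∈ Icc 1 n, n.choose k * b ^ k * (H k / (k * c ^ k)) := by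
  have h := sum_choose_mul_H2 n a b
  rw [eq_neg_of_add_eq_zero_left habc] at h
  refine mul_left_cancel₀ (pow_ne_zero n ha) ?_
  calc a ^ n * ∑ k ∈ Icc 1 n, n.choose k * b ^ k * (H2 k / a ^ k)
      = ∑ k ∈ Icc 1 n, n.choose k * a ^ (n - k) * b ^ k * H2 k := by
        rw [mul_sum]
        refine sum_congr rfl fun k hk => ?_
        rw [← pow_sub_mul_pow a (mem_Icc.mp hk).2]
        field_simp
    _ = -((-c) ^ n * ∑ k ∈ Icc 1 n, n.choose k * b ^ k * (H k / (k * c ^ k))) := by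
        rw [h, mul_sum]
        congr 1
        refine sum_congr rfl fun k hk => ?_
        rw [← pow_sub_mul_pow (-c) (mem_Icc.mp hk).2, neg_pow b, neg_pow c k]
        field_simp
    _ = a ^ n * (-(-c / a) ^ n * ∑ k ∈ Icc 1 n, n.choose k * b ^ k * (H k / (k * c ^ k))) := by
        rw [div_pow]
        field_simp

end Harmonic

section Congruence

namespace ratModEq

theorem symm {m : ℕ} {a b : ℚ} (h : ratModEq m a b) : ratModEq m b a := by
  rwa [ratModEq, ← neg_sub, Rat.num_neg_eq_neg_num, dvd_neg]

theorem neg {m : ℕ} {a b : ℚ} (h : ratModEq m a b) : ratModEq m (-a) (-b) := by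
  rw [ratModEq, neg_sub_neg]
  exact h.symm

theorem intCast_iff {m : ℕ} {a b : ℤ} : ratModEq m a b ↔ (a : ZMod m) = b := by
  rw [ratModEq, ← Int.cast_sub, Rat.num_intCast, ← ZMod.intCast_zmod_eq_zero_iff_dvd,
    Int.cast_sub, sub_eq_zero]

variable {p : ℕ} [Fact p.Prime]

theorem iff_padicNorm_sub_lt_one {a b : ℚ} : ratModEq p a b ↔ padicNorm p (a - b) < 1 := by
  rw [ratModEq, ← padicNorm.int_lt_one_iff]
  constructor <;> intro h
  · have hden : ¬ p ∣ (a - b).den := fun hdvd =>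
      (Fact.out : p.Prime).ne_one <| Nat.eq_one_of_dvd_coprimes (a - b).reduced
        (Int.natCast_dvd.mp ((padicNorm.int_lt_one_iff _).mp h)) hdvd
    rwa [← Rat.num_div_den (a - b), padicNorm.div, (padicNorm.nat_eq_one_iff _).mpr hden, div_one]
  · rw [← Rat.mul_den_eq_num, padicNorm.mul]
    exact mul_lt_one_of_nonneg_of_lt_one_left (padicNorm.nonneg _) h (padicNorm.of_nat _)

theorem trans {a b c : ℚ} (hab : ratModEq p a b) (hbc : ratModEq p b c) : ratModEq p a c := by
  rw [iff_padicNorm_sub_lt_one] at *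
  rw [← sub_add_sub_cancel a b c]
  exact padicNorm.nonarchimedean.trans_lt (max_lt hab hbc)

theorem mul_right {a b c : ℚ} (h : ratModEq p a b) (hc : padicNorm p c ≤ 1) :
    ratModEq p (a * c) (b * c) := by
  rw [iff_padicNorm_sub_lt_one] at *
  rw [← sub_mul, padicNorm.mul]
  exact mul_lt_one_of_nonneg_of_lt_one_left (padicNorm.nonneg _) h hc

theorem mul {a b c d : ℚ} (hab : ratModEq p a b) (hcd : ratModEq p c d)
    (hb : padicNorm p b ≤ 1) (hc : padicNorm p c ≤ 1) : ratModEq p (a * c) (b * d) := by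
  refine (hab.mul_right hc).trans ?_
  rw [mul_comm b, mul_comm b]
  exact hcd.mul_right hb

theorem sum {ι : Type*} {s : Finset ι} {f g : ι → ℚ} (h : ∀ i ∈ s, ratModEq p (f i) (g i)) :
    ratModEq p (∑ i ∈ s, f i) (∑ i ∈ s, g i) := by
  rw [iff_padicNorm_sub_lt_one, ← sum_sub_distrib]
  exact padicNorm.sum_lt' (fun i hi => iff_padicNorm_sub_lt_one.mp (h i hi)) zero_lt_one

end ratModEq

variable {p : ℕ} [Fact p.Prime]

theorem ratModEq_div_pow_legendreSym {a : ℤ} (ha : ¬ (p : ℤ) ∣ a) (b : ℤ) :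
    ratModEq p (((b : ℚ) / a) ^ (p / 2)) (legendreSym p (a * b) : ℤ) := by
  have hanorm : padicNorm p a = 1 := (padicNorm.int_eq_one_iff a).mpr ha
  have ha0 : (a : ℚ) ≠ 0 := Int.cast_ne_zero.mpr fun h => ha (h ▸ dvd_zero _)
  have hpow : ratModEq p ((b ^ (p / 2) : ℤ) : ℚ)
      ((legendreSym p (a * b) * a ^ (p / 2) : ℤ) : ℚ) := by
    rw [← ZMod.intCast_zmod_eq_zero_iff_dvd] at ha
    have hsq := congrArg (Int.cast (R := ZMod p)) (legendreSym.sq_one p ha)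
    rw [ratModEq.intCast_iff, legendreSym.mul]
    push_cast at hsq ⊢
    rw [← legendreSym.eq_pow, ← legendreSym.eq_pow]
    linear_combination -(legendreSym p b : ZMod p) * hsq
  have hdiv := hpow.mul_right (c := ((a : ℚ) ^ (p / 2))⁻¹) (by
    rw [← one_div, padicNorm.div, IsAbsoluteValue.abv_pow (padicNorm p), hanorm]; simp)
  push_cast at hdiv
  rwa [mul_inv_cancel_right₀ (pow_ne_zero _ ha0), ← div_eq_mul_inv, ← div_pow] at hdiv

open Nat in
theorem centralBinom_eq_neg_four_pow_mul_choose {R : Type*} [CommRing R] [NoZeroDivisors R]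
    {n k : ℕ} (hn : (2 * n + 1 : R) = 0) (hk : (k ! : R) ≠ 0) :
    (k.centralBinom : R) = n.choose k * (-4) ^ k := by
  induction k with
  | zero => simp
  | succ k ih =>
    rw [factorial_succ, cast_mul] at hk
    have ih := ih (right_ne_zero_of_mul hk)
    have hcentral : ((k + 1 : ℕ) : R) * (k + 1).centralBinom
        = 2 * (2 * k + 1) * k.centralBinom :=
      mod_cast congrArg (Nat.cast (R := R)) (succ_mul_centralBinom_succ k)
    have hchoose : (n.choose (k + 1) : R) * (k + 1 : ℕ) = n.choose k * (n - k) := by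
      obtain hkn | hnk := le_or_gt k n
      · exact_mod_cast congrArg (Nat.cast (R := R)) (choose_succ_right_eq n k)
      · simp [choose_eq_zero_of_lt hnk, choose_eq_zero_of_lt (hnk.trans k.lt_succ_self)]
    refine mul_left_cancel₀ (left_ne_zero_of_mul hk) ?_
    linear_combination hcentral + 2 * (2 * (k : R) + 1) * ih + 4 * (-4) ^ k * hchoose
      + 2 * (n.choose k : R) * (-4) ^ k * hn

theorem choose_two_mul_ratModEq {n k : ℕ} (hpn : p = 2 * n + 1) (hk : k < p) :
    ratModEq p ((2 * k).choose k) (n.choose k * (-4) ^ k) := by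
  have hn : (2 * n + 1 : ZMod p) = 0 := mod_cast hpn ▸ ZMod.natCast_self p
  have hfact : (k.factorial : ZMod p) ≠ 0 := by
    rw [Ne, ZMod.natCast_eq_zero_iff, (Fact.out : p.Prime).dvd_factorial]
    exact hk.not_ge
  have h := centralBinom_eq_neg_four_pow_mul_choose hn hfact
  have hcast : ratModEq p (((2 * k).choose k : ℤ) : ℚ) ((n.choose k * (-4) ^ k : ℤ) : ℚ) :=
    ratModEq.intCast_iff.mpr (by push_cast; exact h)
  push_cast at hcast
  exact hcast

theorem sum_choose_two_mul_mul_ratModEq {n : ℕ} (hpn : p = 2 * n + 1) {w : ℕ → ℚ}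
    (hw : ∀ k ∈ Icc 1 n, padicNorm p (w k) ≤ 1) :
    ratModEq p (∑ k ∈ Icc 1 n, (2 * k).choose k * w k)
      (∑ k ∈ Icc 1 n, n.choose k * (-4) ^ k * w k) :=
  ratModEq.sum fun k hk =>
    (choose_two_mul_ratModEq hpn (by grind)).mul_right (hw k hk)

theorem padicNorm_sum_intCast_mul_le_one {ι : Type*} {s : Finset ι} (a : ι → ℤ) {w : ι → ℚ}
    (hw : ∀ i ∈ s, padicNorm p (w i) ≤ 1) : padicNorm p (∑ i ∈ s, a i * w i) ≤ 1 :=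
  padicNorm.sum_le' (fun i hi => (padicNorm.mul (a i : ℚ) (w i)).trans_le <|
    mul_le_one₀ (padicNorm.of_int _) (padicNorm.nonneg _) (hw i hi)) zero_le_one

theorem padicNorm_natCast_eq_one {k : ℕ} (hk0 : k ≠ 0) (hk : k < p) : padicNorm p k = 1 :=
  (padicNorm.nat_eq_one_iff k).mpr (Nat.not_dvd_of_pos_of_lt hk0.bot_lt hk)

theorem padicNorm_sum_one_div_pow_le_one {k : ℕ} (hk : k < p) (r : ℕ) :
    padicNorm p (∑ j ∈ Icc 1 k, 1 / (j : ℚ) ^ r) ≤ 1 := by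
  refine padicNorm.sum_le' (fun j hj => ?_) zero_le_one
  rw [mem_Icc] at hj
  rw [padicNorm.div, IsAbsoluteValue.abv_pow (padicNorm p),
    padicNorm_natCast_eq_one (by omega) (by omega), padicNorm.one, one_pow, div_one]

theorem padicNorm_H2_div_pow_le_one {k : ℕ} (hk : k < p) {a : ℚ} (ha : padicNorm p a = 1) :
    padicNorm p (H2 k / a ^ k) ≤ 1 := by
  rw [padicNorm.div, IsAbsoluteValue.abv_pow (padicNorm p), ha, one_pow, div_one]
  exact padicNorm_sum_one_div_pow_le_one hk 2

theorem padicNorm_H_div_mul_pow_le_one {k : ℕ} (hk0 : k ≠ 0) (hk : k < p) {a : ℚ}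
    (ha : padicNorm p a = 1) : padicNorm p (H k / (k * a ^ k)) ≤ 1 := by
  rw [padicNorm.div, padicNorm.mul, IsAbsoluteValue.abv_pow (padicNorm p), ha,
    padicNorm_natCast_eq_one hk0 hk, one_pow, one_mul, div_one]
  simpa only [H, pow_one] using padicNorm_sum_one_div_pow_le_one hk 1

end Congruence

theorem stmt12 (p n : ℕ) (hp : Fact p.Prime) (hpn : p = 2 * n + 1)
    (m : ℤ) (hm0 : ¬ (p : ℤ) ∣ m) (hm4 : ¬ (p : ℤ) ∣ (m - 4)) :
    ratModEq p
      (∑ k ∈ Finset.Icc 1 n, ((2 * k).choose k : ℚ) / (m : ℚ) ^ k * H2 k)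
      (-((@legendreSym p hp (m * (m - 4)) : ℤ) : ℚ) *
        ∑ k ∈ Finset.Icc 1 n, ((2 * k).choose k : ℚ) * H k / (k * ((4 - m : ℤ) : ℚ) ^ k)) := by
  have hm4' : ¬ (p : ℤ) ∣ 4 - m := by rwa [dvd_sub_comm]
  have hmnorm := (padicNorm.int_eq_one_iff m).mpr hm0
  have h4norm := (padicNorm.int_eq_one_iff (4 - m)).mpr hm4'
  have hH2 : ∀ k ∈ Icc 1 n, padicNorm p (H2 k / (m : ℚ) ^ k) ≤ 1 := fun k hk =>
    padicNorm_H2_div_pow_le_one (by grind) hmnorm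
  have hH : ∀ k ∈ Icc 1 n, padicNorm p (H k / (k * ((4 - m : ℤ) : ℚ) ^ k)) ≤ 1 := fun k hk =>
    padicNorm_H_div_mul_pow_le_one (by grind) (by grind) h4norm
  have hsum := padicNorm_sum_intCast_mul_le_one (fun k => n.choose k * (-4) ^ k) hH
  have hlegendre := ratModEq_div_pow_legendreSym hm0 (m - 4)
  rw [show p / 2 = n by omega] at hlegendre
  have hexact := sum_choose_mul_H2_div_pow n (a := m) (b := -4) (c := (4 - m : ℤ))
    (Int.cast_ne_zero.mpr fun h => hm0 (h ▸ dvd_zero _))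
    (Int.cast_ne_zero.mpr fun h => hm4' (h ▸ dvd_zero _)) (by push_cast; ring)
  simp only [div_mul_eq_mul_div, mul_div_assoc, neg_mul]
  refine (sum_choose_two_mul_mul_ratModEq hpn hH2).trans ?_
  rw [hexact, neg_mul, ← Int.cast_neg, neg_sub]
  exact (hlegendre.mul (sum_choose_two_mul_mul_ratModEq hpn hH).symm
    (padicNorm.of_int _) (mod_cast hsum)).neg
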